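/- For every n ≥ 1, the number of neutral normal forms of size n equals the number of Motzkin trees with n nodes. (Equivalently, the maps MoToNe and NeToMo of the paper are mutually inverse size-preserving bijections between Motzkin trees and neutral normal forms.) -/

import Mathlib

/-- Lambda terms with de Bruijn indices. -/
inductive Term : Type
  | var : ℕ → Term
  | app : Term → Term → Term
  | abs : Term → Term

namespace Term

/-- Natural size: every operator (zero, successor, application, abstraction) has size 1. -/
def size : Term → ℕ
  | var k => k + 1
  | app M N => M.size + N.size + 1
  | abs M => M.size + 1

end Term

/-- `L n` is the number of lambda terms of size `n`. -/
noncomputable def L (n : ℕ) : ℕ := Nat.card {t : Term // t.size = n}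


mutual
  /-- Normal forms: terms with no subterm of the form `app (abs M) N`. -/
  inductive IsNormal : Term → Prop
    | of_neutral {t : Term} : IsNeutralNormal t → IsNormal t
    | abs {t : Term} : IsNormal t → IsNormal (Term.abs t)

  /-- Neutral normal forms: normal forms whose outermost constructor is `var` or `app`. -/
  inductive IsNeutralNormal : Term → Prop
    | var (k : ℕ) : IsNeutralNormal (Term.var k)
    | app {m n : Term} : IsNeutralNormal m → IsNormal n → IsNeutralNormal (Term.app m n)
end

/-- Motzkin trees (unary-binary trees): every node has 0, 1 or 2 ordered children. -/
inductive Motzkin : Type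
  | leaf : Motzkin
  | un : Motzkin → Motzkin
  | bin : Motzkin → Motzkin → Motzkin

/-- Number of nodes of a Motzkin tree. -/
def Motzkin.size : Motzkin → ℕ
  | .leaf => 1
  | .un t => t.size + 1
  | .bin l r => l.size + r.size + 1


/-- Increment a neutral term by one. -/
def Term.inc : Term → Term
  | .var k => .var (k + 1)
  | .app m n => .app m (.abs n)
  | .abs m => .abs m

/-- The map MoToNe. -/
def Motzkin.toNe : Motzkin → Term
  | .leaf => .var 0
  | .un t => t.toNe.inc
  | .bin l r => .app l.toNe r.toNe

theorem not_neutral_abs (t : Term) : ¬ IsNeutralNormal (.abs t) := by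
  intro h; cases h

theorem inc_neutral {t : Term} (h : IsNeutralNormal t) : IsNeutralNormal t.inc := by
  cases h with
  | var k => exact .var _
  | app h1 h2 => exact .app h1 (.abs h2)

theorem inc_size {t : Term} (h : IsNeutralNormal t) : t.inc.size = t.size + 1 := by
  cases h with
  | var k => rfl
  | app h1 h2 => simp only [Term.inc, Term.size]; omega

theorem inc_inj {s t : Term} (hs : IsNeutralNormal s) (ht : IsNeutralNormal t)
    (h : s.inc = t.inc) : s = t := by
  cases hs <;> cases ht <;> simp_all [Term.inc]

theorem toNe_neutral (m : Motzkin) : IsNeutralNormal m.toNe := by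
  induction m with
  | leaf => exact .var 0
  | un t ih => exact inc_neutral ih
  | bin l r ihl ihr => exact .app ihl (.of_neutral ihr)

theorem toNe_size (m : Motzkin) : m.toNe.size = m.size := by
  induction m with
  | leaf => rfl
  | un t ih => rw [Motzkin.toNe, inc_size (toNe_neutral t), ih, Motzkin.size]
  | bin l r ihl ihr => rw [Motzkin.toNe, Term.size, ihl, ihr, Motzkin.size]

theorem inc_ne_zero {t : Term} : t.inc ≠ .var 0 := by
  cases t <;> simp [Term.inc]

theorem inc_ne_app {t m n : Term} (hn : IsNeutralNormal n) : t.inc ≠ .app m n := by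
  intro h
  cases t with
  | var k => simp [Term.inc] at h
  | abs k => simp [Term.inc] at h
  | app a b =>
    simp only [Term.inc, Term.app.injEq] at h
    exact not_neutral_abs b (h.2 ▸ hn)

theorem toNe_injective : Function.Injective Motzkin.toNe := by
  intro a
  induction a with
  | leaf =>
    intro b h
    cases b with
    | leaf => rfl
    | un t => exact absurd h.symm inc_ne_zero
    | bin l r => simp [Motzkin.toNe] at h
  | un t ih =>
    intro b h
    cases b with
    | leaf => exact absurd h inc_ne_zero
    | un s => rw [ih (inc_inj (toNe_neutral t) (toNe_neutral s) h)]
    | bin l r => exact absurd h (inc_ne_app (toNe_neutral r))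
  | bin l r ihl ihr =>
    intro b h
    cases b with
    | leaf => simp [Motzkin.toNe] at h
    | un s => exact absurd h.symm (inc_ne_app (toNe_neutral r))
    | bin l' r' =>
      simp only [Motzkin.toNe, Term.app.injEq] at h
      rw [ihl h.1, ihr h.2]

theorem toNe_surj (n : ℕ) : ∀ t : Term, t.size = n → IsNeutralNormal t →
    ∃ m : Motzkin, m.toNe = t := by
  induction n using Nat.strong_induction_on with
  | _ n ih =>
    intro t hs ht
    cases ht with
    | var k =>
      cases k with
      | zero => exact ⟨.leaf, rfl⟩
      | succ k =>
        obtain ⟨m, hm⟩ := ih (Term.var k).size (by simp only [Term.size] at *; omega) _ rfl (.var k)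
        exact ⟨.un m, by rw [Motzkin.toNe, hm]; rfl⟩
    | @app a b ha hb =>
      cases hb with
      | of_neutral hb =>
        obtain ⟨l, hl⟩ := ih a.size (by simp only [Term.size] at *; omega) _ rfl ha
        obtain ⟨r, hr⟩ := ih b.size (by simp only [Term.size] at *; omega) _ rfl hb
        exact ⟨.bin l r, by rw [Motzkin.toNe, hl, hr]⟩
      | @abs c hc =>
        obtain ⟨m, hm⟩ := ih (Term.app a c).size (by simp only [Term.size] at *; omega) _ rfl
          (.app ha hc)
        exact ⟨.un m, by rw [Motzkin.toNe, hm]; rfl⟩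

theorem neutralNormal_equinumerous_motzkin :
    ∀ n : ℕ, 1 ≤ n →
      Nat.card {t : Term // IsNeutralNormal t ∧ t.size = n}
        = Nat.card {m : Motzkin // m.size = n} := by
  intro n _
  symm
  refine Nat.card_eq_of_bijective
    (fun m : {m : Motzkin // m.size = n} =>
      (⟨m.1.toNe, toNe_neutral m.1, (toNe_size m.1).trans m.2⟩ :
        {t : Term // IsNeutralNormal t ∧ t.size = n})) ⟨?_, ?_⟩
  · intro a b h
    exact Subtype.ext (toNe_injective (congrArg Subtype.val h))
  · rintro ⟨t, ht, hs⟩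
    obtain ⟨m, hm⟩ := toNe_surj n t hs ht
    exact ⟨⟨m, by rw [← toNe_size, hm, hs]⟩, Subtype.ext hm⟩
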